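/- For all natural numbers n ≥ 1 and k ≥ 0, the lcm-binomial number [n+k, n] = lcm(k+1, k+2, …, k+n) / lcm(1, 2, …, n) has at most k prime factors counted with multiplicity: Ω([n+k, n]) ≤ k. (Equivalently, every entry of the (k+1)-th diagonal of the lcm-binomial triangle has at most k prime factors with multiplicity.) -/

import Mathlib

/-- `rangeLcm a b` is `lcm(a, a+1, …, b)`. -/
def rangeLcm (a b : ℕ) : ℕ := (Finset.Icc a b).lcm id

/-- The lcm-binomial number `[n, k] = lcm(n, n-1, …, n-k+1) / lcm(1, 2, …, k)`. -/
def lcmBinom (n k : ℕ) : ℕ := rangeLcm (n - k + 1) n / rangeLcm 1 k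

/-!
Write `L n = lcm(1, …, n)`. If `p` is the least prime factor of `m > 1`, then `m / p` is at most
`m - 1`, hence divides `L (m - 1)`; so `L m` divides `p * L (m - 1)`. Iterating, `L (n + k) / L n`
divides the product of the least prime factors of `n + 1, …, n + k`, which has at most `k` prime
factors. Any `n` consecutive integers contain a multiple of each of `1, …, n`, so `[n + k, n]` is
an exact quotient, and it divides `L (n + k) / L n`.
-/

open Finset ArithmeticFunction
open scoped ArithmeticFunction.Omega

theorem cardFactors_le_of_dvd {a b : ℕ} (hb : b ≠ 0) (hab : a ∣ b) : Ω a ≤ Ω b :=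
  (Nat.primeFactorsList_sublist_of_dvd hab hb).length_le

theorem cardFactors_finset_prod {ι : Type*} {s : Finset ι} {f : ι → ℕ} (hf : ∀ i ∈ s, f i ≠ 0) :
    Ω (∏ i ∈ s, f i) = ∑ i ∈ s, Ω (f i) := by
  have hprod : (s.val.map f).prod ≠ 0 := prod_ne_zero_iff.2 hf
  exact (cardFactors_multiset_prod hprod).trans (by rw [Multiset.map_map]; rfl)

theorem cardFactors_minFac_le_one (m : ℕ) : Ω m.minFac ≤ 1 := by
  rcases eq_or_ne m 1 with rfl | hm
  · simp
  · exact (cardFactors_apply_prime (Nat.minFac_prime hm)).le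

theorem dvd_rangeLcm {a b x : ℕ} (hax : a ≤ x) (hxb : x ≤ b) : x ∣ rangeLcm a b :=
  Finset.dvd_lcm (f := id) (mem_Icc.2 ⟨hax, hxb⟩)

theorem rangeLcm_dvd_iff {a b y : ℕ} : rangeLcm a b ∣ y ↔ ∀ x, a ≤ x → x ≤ b → x ∣ y := by
  simp [rangeLcm, Finset.lcm_dvd_iff]

theorem rangeLcm_dvd_rangeLcm {a b c d : ℕ} (hca : c ≤ a) (hbd : b ≤ d) :
    rangeLcm a b ∣ rangeLcm c d :=
  Finset.lcm_mono (Icc_subset_Icc hca hbd)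

theorem rangeLcm_pos {a : ℕ} (ha : 0 < a) (b : ℕ) : 0 < rangeLcm a b := by
  have hzero : 0 ∉ Icc a b := by simp [ha.ne']
  exact Nat.pos_of_ne_zero (by simpa [rangeLcm, Finset.lcm_eq_zero_iff] using hzero)

theorem rangeLcm_one_dvd_rangeLcm_succ_add (n k : ℕ) :
    rangeLcm 1 n ∣ rangeLcm (k + 1) (n + k) := by
  refine rangeLcm_dvd_iff.2 fun x hx hxn => ?_
  have hlow : k < x * (k / x + 1) := Nat.lt_mul_div_succ k hx
  have hhigh : x * (k / x + 1) ≤ n + k :=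
    calc x * (k / x + 1) = x + x * (k / x) := by ring
      _ ≤ n + k := Nat.add_le_add hxn (Nat.mul_div_le k x)
  exact (dvd_mul_right x _).trans (dvd_rangeLcm hlow hhigh)

theorem succ_dvd_rangeLcm_one_mul_minFac (m : ℕ) : m + 1 ∣ rangeLcm 1 m * (m + 1).minFac := by
  rcases Nat.eq_zero_or_pos m with rfl | hm
  · exact one_dvd _
  · have hlt : (m + 1) / (m + 1).minFac < m + 1 :=
      Nat.div_lt_self m.succ_pos (Nat.minFac_prime (by omega)).one_lt
    have hpos : 0 < (m + 1) / (m + 1).minFac :=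
      Nat.div_pos (Nat.minFac_le m.succ_pos) (Nat.minFac_pos _)
    calc m + 1 = (m + 1) / (m + 1).minFac * (m + 1).minFac :=
          (Nat.div_mul_cancel (Nat.minFac_dvd _)).symm
      _ ∣ rangeLcm 1 m * (m + 1).minFac :=
          mul_dvd_mul_right (dvd_rangeLcm hpos (Nat.le_of_lt_succ hlt)) _

theorem rangeLcm_one_succ_dvd_mul_minFac (m : ℕ) :
    rangeLcm 1 (m + 1) ∣ rangeLcm 1 m * (m + 1).minFac := by
  refine rangeLcm_dvd_iff.2 fun x hx hxm => ?_
  rcases Nat.le_succ_iff.1 hxm with hxm | rfl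
  · exact (dvd_rangeLcm hx hxm).mul_right _
  · exact succ_dvd_rangeLcm_one_mul_minFac m

theorem rangeLcm_one_add_dvd_mul_prod_minFac (n k : ℕ) :
    rangeLcm 1 (n + k) ∣ rangeLcm 1 n * ∏ m ∈ Ioc n (n + k), m.minFac := by
  induction k with
  | zero => simp
  | succ k ih =>
    calc rangeLcm 1 (n + k + 1)
      _ ∣ rangeLcm 1 (n + k) * (n + k + 1).minFac := rangeLcm_one_succ_dvd_mul_minFac (n + k)
      _ ∣ rangeLcm 1 n * (∏ m ∈ Ioc n (n + k), m.minFac) * (n + k + 1).minFac :=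
        mul_dvd_mul_right ih _
      _ = rangeLcm 1 n * ∏ m ∈ Ioc n (n + k + 1), m.minFac := by
        rw [prod_Ioc_succ_top (Nat.le_add_right n k), mul_assoc]

theorem lcmBinom_add_dvd_prod_minFac (n k : ℕ) :
    lcmBinom (n + k) n ∣ ∏ m ∈ Ioc n (n + k), m.minFac := by
  rw [lcmBinom, Nat.add_sub_cancel_left,
    Nat.div_dvd_iff_dvd_mul (rangeLcm_one_dvd_rangeLcm_succ_add n k) (rangeLcm_pos one_pos n)]
  exact (rangeLcm_dvd_rangeLcm (Nat.le_add_left 1 k) le_rfl).trans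
    (rangeLcm_one_add_dvd_mul_prod_minFac n k)

/-- For `n ≥ 1` and `k ≥ 0`, the lcm-binomial number `[n+k, n]` has at most
`k` prime factors counted with multiplicity: `Ω([n+k, n]) ≤ k`. -/
theorem cardFactors_lcmBinom_diag_le (n k : ℕ) (hn : 1 ≤ n) :
    (lcmBinom (n + k) n).primeFactorsList.length ≤ k := by
  have hminFac : ∀ m ∈ Ioc n (n + k), m.minFac ≠ 0 := fun m _ => (Nat.minFac_pos m).ne'
  calc (lcmBinom (n + k) n).primeFactorsList.length
    _ = Ω (lcmBinom (n + k) n) := cardFactors_apply.symm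
    _ ≤ Ω (∏ m ∈ Ioc n (n + k), m.minFac) :=
      cardFactors_le_of_dvd (prod_ne_zero_iff.2 hminFac) (lcmBinom_add_dvd_prod_minFac n k)
    _ = ∑ m ∈ Ioc n (n + k), Ω m.minFac := cardFactors_finset_prod hminFac
    _ ≤ ∑ m ∈ Ioc n (n + k), 1 := sum_le_sum fun m _ => cardFactors_minFac_le_one m
    _ = k := by simp
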